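/- arXiv:1804.02587 — 2 statements merged into one kernel-verified Lean document; each statement's English description precedes it below -/
import Mathlib

section
/- Let K be a linearly ordered field with a non-archimedean multiplicative absolute value |·| : K → ℝ satisfying |x+y| = max(|x|,|y|) whenever x ≥ 0 and y ≥ 0. Let d ≥ 1 and let M = (m_{ij}) be a d×d upper triangular matrix over K with det M ≠ 0 (so m_{jj} ≠ 0 for all j). Define I_M = {x ∈ ℝ^d : x_1+⋯+x_d = 1, and for all 1 ≤ i < j ≤ d, |m_{ij}| ≤ |m_{jj}|·e^{x_i−x_j}} and I⁺_M = {x ∈ ℝ^d : x_1+⋯+x_d = 1, and for all 1 ≤ i < d, |m_{i,i+1}| ≤ |m_{i+1,i+1}|·e^{x_i−x_{i+1}}}. If M is totally nonnegative, then I_M = I⁺_M. -/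
noncomputable section

/-- Total nonnegativity of a matrix over a linearly ordered field: all minors
are nonnegative. -/
def TotNonneg {K : Type*} [Field K] [LinearOrder K] [IsStrictOrderedRing K] {d : ℕ}
    (M : Matrix (Fin d) (Fin d) K) : Prop :=
  ∀ (k : ℕ) (f g : Fin k → Fin d), StrictMono f → StrictMono g →
    0 ≤ (M.submatrix f g).det

/-!
For `i < k < j`, nonnegativity of the `2 × 2` minor on rows `i, k` and columns `k, j` reads
`m_ij * m_kk ≤ m_ik * m_kj`. An absolute value that is monotone on nonnegative elements preserves
this inequality, and `|m_kk|` can then be cancelled: the bound `|m_ij| ≤ |m_jj| * e^(x_i - x_j)`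
follows from the bounds at `(i, k)` and `(k, j)`. Hence the bounds at consecutive indices propagate
to all pairs `i < j`.
-/

/-- Nonnegativity of all `k × k` minors of a possibly rectangular matrix. Total nonnegativity is
the conjunction over all `k`; the orders are kept apart because the argument concerns only the
entries (`k = 1`) and the `2 × 2` minors. -/
def NonnegMinors {ι κ R : Type*} [Preorder ι] [Preorder κ] [CommRing R] [LE R] (k : ℕ)
    (M : Matrix ι κ R) : Prop :=
  ∀ (f : Fin k → ι) (g : Fin k → κ), StrictMono f → StrictMono g → 0 ≤ (M.submatrix f g).det

namespace NonnegMinors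

variable {ι κ R : Type*} [Preorder ι] [Preorder κ] [CommRing R] {M : Matrix ι κ R}

theorem apply_nonneg [LE R] (hM : NonnegMinors 1 M) (i : ι) (j : κ) : 0 ≤ M i j := by
  simpa using hM (fun _ ↦ i) (fun _ ↦ j) (Subsingleton.strictMono _) (Subsingleton.strictMono _)

theorem antidiag_mul_le_diag_mul [PartialOrder R] [IsOrderedAddMonoid R] (hM : NonnegMinors 2 M)
    {i i' : ι} {j j' : κ} (hi : i < i') (hj : j < j') : M i j' * M i' j ≤ M i j * M i' j' := by
  have hdet := hM ![i, i'] ![j, j'] (by simpa using hi) (by simpa using hj)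
  rw [Matrix.det_fin_two] at hdet
  exact sub_nonneg.1 hdet

end NonnegMinors

theorem monotoneOn_Ici_of_map_add_eq_sup {G α : Type*} [AddCommGroup G] [Preorder G]
    [IsOrderedAddMonoid G] [SemilatticeSup α] {f : G → α}
    (hf : ∀ x y : G, 0 ≤ x → 0 ≤ y → f (x + y) = f x ⊔ f y) :
    MonotoneOn f (Set.Ici 0) := by
  intro a ha b _ hab
  have hb : f b = f a ⊔ f (b - a) := by
    simpa only [add_sub_cancel] using hf a (b - a) ha (sub_nonneg.2 hab)
  exact hb ▸ le_sup_left

theorem diag_ne_zero_of_isUpperTriangular_of_det_ne_zero {m R : Type*} [Fintype m] [LinearOrder m]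
    [CommRing R] {M : Matrix m m R} (hM : M.IsUpperTriangular) (hdet : M.det ≠ 0) (k : m) :
    M k k ≠ 0 := fun hk ↦
  hdet <| Matrix.det_of_isUpperTriangular hM ▸ Finset.prod_eq_zero (Finset.mem_univ k) hk

theorem rel_of_lt_of_forall_covBy {ι : Type*} [Preorder ι] [LocallyFiniteOrder ι]
    {r : ι → ι → Prop} (hr : ∀ i k j, i < k → k < j → r i k → r k j → r i j)
    (hcov : ∀ i j, i ⋖ j → r i j) {i j : ι} (hij : i < j) : r i j := by
  induction transGen_covBy_of_lt hij with
  | single hcovBy => exact hcov _ _ hcovBy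
  | tail hpath hkj ih =>
    have hik := lt_iff_transGen_covBy.2 hpath
    exact hr _ _ _ hik hkj.lt (ih hik) (hcov _ _ hkj)

theorem le_mul_exp_sub_trans {a b c p q u v w : ℝ} (hq : 0 < q) (hb₀ : 0 ≤ b)
    (hminor : c * q ≤ a * b) (ha : a ≤ q * Real.exp (u - v))
    (hb : b ≤ p * Real.exp (v - w)) : c ≤ p * Real.exp (u - w) := by
  refine le_of_mul_le_mul_right ?_ hq
  calc
    c * q ≤ a * b := hminor
    _ ≤ q * Real.exp (u - v) * (p * Real.exp (v - w)) := by gcongr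
    _ = p * (Real.exp (u - v) * Real.exp (v - w)) * q := by ring
    _ = p * Real.exp (u - w) * q := by rw [← Real.exp_add, sub_add_sub_cancel]

theorem stmt1_general {ι R : Type*} [Preorder ι] [LocallyFiniteOrder ι] [CommRing R]
    [PartialOrder R] [IsOrderedRing R] {abv : R → ℝ} (habv_nonneg : ∀ x, 0 ≤ abv x)
    (habv_mul : ∀ x y, abv (x * y) = abv x * abv y) (habv_mono : MonotoneOn abv (Set.Ici 0))
    {M : Matrix ι ι R} (hdiag : ∀ k, abv (M k k) ≠ 0)
    (hM₁ : NonnegMinors 1 M) (hM₂ : NonnegMinors 2 M) (x : ι → ℝ) :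
    (∀ i j, i < j → abv (M i j) ≤ abv (M j j) * Real.exp (x i - x j)) ↔
      ∀ i j, i ⋖ j → abv (M i j) ≤ abv (M j j) * Real.exp (x i - x j) := by
  refine ⟨fun h i j hij ↦ h i j hij.lt, fun h i j ↦ rel_of_lt_of_forall_covBy ?_ h⟩
  intro i k j hik hkj
  have hminor : abv (M i j) * abv (M k k) ≤ abv (M i k) * abv (M k j) := by
    simpa only [habv_mul] using
      habv_mono (mul_nonneg (hM₁.apply_nonneg i j) (hM₁.apply_nonneg k k))
        (mul_nonneg (hM₁.apply_nonneg i k) (hM₁.apply_nonneg k j))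
        (hM₂.antidiag_mul_le_diag_mul hik hkj)
  exact le_mul_exp_sub_trans ((habv_nonneg _).lt_of_ne' (hdiag k)) (habv_nonneg _) hminor

/-- Corollary 4.7 (upper triangular case): for a totally nonnegative upper
triangular invertible matrix `M`, the set `I_M` cut out by all the inequalities
`x_i - x_j + v(m_ii/m_jj) ≥ -v(m_ij/m_ii)` for `i < j` (written multiplicatively
via the absolute value `|·| = e^{-v(·)}` as `|m_ij| ≤ |m_jj|·e^{x_i - x_j}`)
coincides with the set `I⁺_M` cut out by the inequalities for consecutive
indices only. -/
theorem stmt1 {K : Type*} [Field K] [LinearOrder K] [IsStrictOrderedRing K] (abv : K → ℝ)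
    (habs0 : ∀ x : K, 0 ≤ abv x)
    (habs1 : ∀ x : K, abv x = 0 ↔ x = 0)
    (habs2 : ∀ x y : K, abv (x * y) = abv x * abv y)
    (habs3 : ∀ x y : K, abv (x + y) ≤ max (abv x) (abv y))
    (hposmax : ∀ x y : K, 0 ≤ x → 0 ≤ y → abv (x + y) = max (abv x) (abv y))
    (d : ℕ) (hd : 1 ≤ d) (M : Matrix (Fin d) (Fin d) K)
    (hupper : ∀ i j : Fin d, j < i → M i j = 0)
    (hdet : M.det ≠ 0)
    (htn : TotNonneg M) :
    {x : Fin d → ℝ | (∑ i, x i) = 1 ∧ ∀ i j : Fin d, i < j →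
        abv (M i j) ≤ abv (M j j) * Real.exp (x i - x j)} =
    {x : Fin d → ℝ | (∑ i, x i) = 1 ∧ ∀ i j : Fin d, (j : ℕ) = (i : ℕ) + 1 →
        abv (M i j) ≤ abv (M j j) * Real.exp (x i - x j)} := by
  have hdiag (k : Fin d) : abv (M k k) ≠ 0 :=
    (habs1 _).not.2 (diag_ne_zero_of_isUpperTriangular_of_det_ne_zero (fun i j ↦ hupper i j) hdet k)
  ext x
  refine and_congr_right fun _ ↦ ?_
  simpa only [Fin.covBy_iff, Nat.covBy_iff_add_one_eq, eq_comm] using stmt1_general habs0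
    habs2 (monotoneOn_Ici_of_map_add_eq_sup hposmax) hdiag (htn 1) (htn 2) x
end
end

section
/- Let (E,F,G) be a triple of flags in ℝ^d with the maximum span property, and let a, b, c ≥ 1 be integers with a+b+c = d. Then the permuted triples (F,G,E) and (F,E,G) also have the maximum span property, and the triple ratios satisfy X_{a,b,c}(E,F,G) = X_{b,c,a}(F,G,E) and X_{a,b,c}(E,F,G)·X_{b,a,c}(F,E,G) = 1. -/
/-!
Moving a block of `p` vectors past a block of `q` vectors multiplies their wedge product by
`(-1) ^ (p * q)`. Under a permutation of the three flags each of the six factors of a triple ratio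
picks up such a sign, and the exponents in the numerator and in the denominator have the same sum,
so the signs cancel. Rotating `(E, F, G)` permutes the factors of the numerator among themselves,
and likewise in the denominator; exchanging `E` and `F` interchanges numerator and denominator, so
it inverts the ratio. The ratio is nonzero because each factor is the determinant of `d` vectors
which span `ℝ^d` by the maximum span property.
-/

noncomputable section

abbrev Vec (d : ℕ) : Type := Fin d → ℝ

/-- A complete flag in `ℝ^d`. -/
def IsFlag {d : ℕ} (F : ℕ → Submodule ℝ (Vec d)) : Prop :=
  Monotone F ∧ ∀ i, i ≤ d → Module.finrank ℝ (F i) = i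

/-- The maximum span property for a tuple of flags. -/
def MaxSpan {d t : ℕ} (F : Fin t → ℕ → Submodule ℝ (Vec d)) : Prop :=
  ∀ a : Fin t → ℕ, (∀ j, a j ≤ d) →
    Module.finrank ℝ ↥(⨆ j, F j (a j)) = min (∑ j, a j) d

/-- The wedge product of the concatenated vectors, viewed as a real number via
`⋀^d ℝ^d ≅ ℝ` (determinant in the standard basis); junk value `0` if the total
number of vectors is not `d`. -/
def wedgeDet {d n1 n2 n3 : ℕ} (u : Fin n1 → Vec d) (v : Fin n2 → Vec d)
    (w : Fin n3 → Vec d) : ℝ :=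
  if h : n1 + n2 + n3 = d then
    (Matrix.of fun i j => (Fin.append (Fin.append u v) w) (Fin.cast h.symm j) i).det
  else 0

/-- A choice, for each `k ≤ d`, of a spanning `k`-tuple of vectors of the member
`F k` of a flag; equivalently a choice of a nonzero element of `⋀^k F^(k)`. -/
def ChoiceFor {d : ℕ} (F : ℕ → Submodule ℝ (Vec d)) (e : (k : ℕ) → Fin k → Vec d) : Prop :=
  ∀ k, k ≤ d → Submodule.span ℝ (Set.range (e k)) = F k

/-- The `(a,b,c)`-triple ratio `X_{a,b,c}(E,F,G)` computed from choices. -/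
def tripleRatio {d : ℕ} (a b c : ℕ) (e f g : (k : ℕ) → Fin k → Vec d) : ℝ :=
  (wedgeDet (e (a-1)) (f b) (g (c+1)) * wedgeDet (e a) (f (b+1)) (g (c-1)) *
   wedgeDet (e (a+1)) (f (b-1)) (g c)) /
  (wedgeDet (e (a+1)) (f b) (g (c-1)) * wedgeDet (e a) (f (b-1)) (g (c+1)) *
   wedgeDet (e (a-1)) (f (b+1)) (g c))

section Rotation

lemma val_finRotate_pow {n : ℕ} (k : ℕ) (i : Fin n) :
    ((finRotate n ^ k) i : ℕ) = (i + k) % n := by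
  induction k with
  | zero => simp [Nat.mod_eq_of_lt i.isLt]
  | succ k ih =>
    have := i.neZero
    rw [pow_succ', Equiv.Perm.mul_apply, finRotate_apply, Fin.val_add, ih, Fin.val_one',
      ← Nat.add_mod, add_assoc]

lemma sign_finRotate_add_pow (p q : ℕ) :
    Equiv.Perm.sign (finRotate (p + q) ^ p) = (-1) ^ (p * q) := by
  cases p with
  | zero => simp
  | succ p =>
    have exponent_eq : (p + 1 + q - 1) * (p + 1) = p * (p + 1) + (p + 1) * q := by
      rw [Nat.add_right_comm, Nat.add_sub_cancel]
      ring
    rw [map_pow, sign_finRotate, ← pow_mul, exponent_eq, pow_add,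
      (Nat.even_mul_succ_self p).neg_one_pow, one_mul]

lemma append_comp_finRotate_pow {α : Type*} {p q : ℕ} (u : Fin p → α) (v : Fin q → α) :
    Fin.append u v ∘ (finRotate (p + q) ^ p) = Fin.append v u ∘ Fin.cast (add_comm p q) := by
  funext j
  obtain ⟨j, rfl⟩ := (finCongr (add_comm q p)).surjective j
  cases j using Fin.addCases with
  | left i =>
    have rotate_eq :
        (finRotate (p + q) ^ p) (Fin.cast (add_comm q p) (Fin.castAdd p i)) = Fin.natAdd p i := by
      ext
      simp [val_finRotate_pow, add_comm _ p, Nat.mod_eq_of_lt]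
    rw [finCongr_apply, Function.comp_apply, rotate_eq, Fin.append_right]
    exact (Fin.append_left v u i).symm
  | right i =>
    have rotate_eq :
        (finRotate (p + q) ^ p) (Fin.cast (add_comm q p) (Fin.natAdd q i)) = Fin.castAdd q i := by
      ext
      rw [val_finRotate_pow, Fin.val_cast, Fin.val_natAdd, Fin.val_castAdd, add_right_comm,
        add_comm q p, Nat.add_mod_left, Nat.mod_eq_of_lt (by lia)]
    rw [finCongr_apply, Function.comp_apply, rotate_eq, Fin.append_left]
    exact (Fin.append_right v u i).symm

end Rotation

section Append

variable {α : Type*} {p q r : ℕ}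

lemma range_append (u : Fin p → α) (v : Fin q → α) :
    Set.range (Fin.append u v) = Set.range u ∪ Set.range v := by
  rw [← Set.Sum.elim_range, ← Fin.append_comp_sumElim]
  exact (finSumFinEquiv.surjective.range_comp _).symm

lemma append_comp_permCongr_sumCongr (x : Fin p → α) (w : Fin r → α)
    (σ : Equiv.Perm (Fin p)) :
    Fin.append x w ∘ finSumFinEquiv.permCongr (Equiv.Perm.sumCongr σ 1) =
      Fin.append (x ∘ σ) w := by
  funext j
  cases j using Fin.addCases <;> simp [Equiv.permCongr_apply]

end Append

section WedgeDet

variable {d p q r : ℕ}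

lemma wedgeDet_eq_basisFun_det (u : Fin p → Vec d) (v : Fin q → Vec d) (w : Fin r → Vec d)
    (h : p + q + r = d) :
    wedgeDet u v w =
      (Pi.basisFun ℝ (Fin d)).det (Fin.append (Fin.append u v) w ∘ Fin.cast h.symm) := by
  rw [wedgeDet, dif_pos h, Pi.basisFun_det_apply, ← Matrix.det_transpose]
  rfl

lemma wedgeDet_eq_sign_mul {p' q' r' : ℕ} {u : Fin p → Vec d} {v : Fin q → Vec d}
    {w : Fin r → Vec d} {u' : Fin p' → Vec d} {v' : Fin q' → Vec d} {w' : Fin r' → Vec d}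
    (h : p + q + r = p' + q' + r') (σ : Equiv.Perm (Fin (p + q + r)))
    (hσ : Fin.append (Fin.append u v) w ∘ σ =
      Fin.append (Fin.append u' v') w' ∘ Fin.cast h) :
    wedgeDet u' v' w' = (Equiv.Perm.sign σ : ℤ) * wedgeDet u v w := by
  by_cases hd : p + q + r = d
  · subst hd
    have map_perm := (Pi.basisFun ℝ (Fin (p + q + r))).det.map_perm
      (Fin.append (Fin.append u v) w) σ
    rw [hσ, Units.smul_def, zsmul_eq_mul] at map_perm
    rw [wedgeDet_eq_basisFun_det _ _ _ h.symm, wedgeDet_eq_basisFun_det _ _ _ rfl]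
    exact map_perm
  · rw [wedgeDet, dif_neg (h ▸ hd), wedgeDet, dif_neg hd, mul_zero]

lemma wedgeDet_swap (u : Fin p → Vec d) (v : Fin q → Vec d) (w : Fin r → Vec d) :
    wedgeDet v u w = (-1) ^ (p * q) * wedgeDet u v w := by
  have blocks_eq : Fin.append (Fin.append u v) w ∘
      finSumFinEquiv.permCongr (Equiv.Perm.sumCongr (finRotate (p + q) ^ p) 1) =
        Fin.append (Fin.append v u) w ∘ Fin.cast (by rw [add_comm p q]) := by
    rw [append_comp_permCongr_sumCongr, append_comp_finRotate_pow, Fin.append_cast_left]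
  rw [wedgeDet_eq_sign_mul _ _ blocks_eq, Equiv.Perm.sign_permCongr, Equiv.Perm.sign_sumCongr,
    sign_finRotate_add_pow]
  simp

lemma wedgeDet_rotate (u : Fin p → Vec d) (v : Fin q → Vec d) (w : Fin r → Vec d) :
    wedgeDet v w u = (-1) ^ (p * (q + r)) * wedgeDet u v w := by
  let assoc : Fin (p + (q + r)) ≃ Fin (p + q + r) := finCongr (add_assoc p q r).symm
  have blocks_eq : Fin.append (Fin.append u v) w ∘
      assoc.permCongr (finRotate (p + (q + r)) ^ p) =
        Fin.append (Fin.append v w) u ∘ Fin.cast (by ring) := by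
    rw [Fin.append_assoc]
    funext j
    exact congrFun (append_comp_finRotate_pow u (Fin.append v w)) (assoc.symm j)
  rw [wedgeDet_eq_sign_mul _ _ blocks_eq, Equiv.Perm.sign_permCongr, sign_finRotate_add_pow]
  simp

lemma wedgeDet_ne_zero_iff (u : Fin p → Vec d) (v : Fin q → Vec d) (w : Fin r → Vec d)
    (h : p + q + r = d) :
    wedgeDet u v w ≠ 0 ↔
      Submodule.span ℝ (Set.range u) ⊔ Submodule.span ℝ (Set.range v) ⊔
        Submodule.span ℝ (Set.range w) = ⊤ := by
  have range_eq : Set.range (Fin.append (Fin.append u v) w ∘ Fin.cast h.symm) =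
      Set.range u ∪ Set.range v ∪ Set.range w := by
    rw [← range_append, ← range_append]
    exact (finCongr h.symm).surjective.range_comp _
  rw [wedgeDet_eq_basisFun_det u v w h, ← isUnit_iff_ne_zero, ← Module.Basis.is_basis_iff_det,
    range_eq, Submodule.span_union, Submodule.span_union]
  refine and_iff_right_of_imp fun span_eq => ?_
  refine linearIndependent_of_top_le_span_of_card_eq_finrank ?_ (by simp)
  rw [range_eq, Submodule.span_union, Submodule.span_union, span_eq]

end WedgeDet

section TripleRatio

variable {d : ℕ}

lemma neg_one_pow_mul_div_cancel {K : Type*} [Field K] {m₁ m₂ m₃ n₁ n₂ n₃ : ℕ}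
    (h : m₁ + m₂ + m₃ = n₁ + n₂ + n₃) (x₁ x₂ x₃ y₁ y₂ y₃ : K) :
    (-1) ^ m₁ * x₁ * ((-1) ^ m₂ * x₂) * ((-1) ^ m₃ * x₃) /
        ((-1) ^ n₁ * y₁ * ((-1) ^ n₂ * y₂) * ((-1) ^ n₃ * y₃)) =
      x₁ * x₂ * x₃ / (y₁ * y₂ * y₃) := by
  have collect_signs (k₁ k₂ k₃ : ℕ) (z₁ z₂ z₃ : K) :
      (-1) ^ k₁ * z₁ * ((-1) ^ k₂ * z₂) * ((-1) ^ k₃ * z₃) =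
        (-1) ^ (k₁ + k₂ + k₃) * (z₁ * z₂ * z₃) := by
    ring
  rw [collect_signs, collect_signs, h, mul_div_mul_left _ _ (by simp)]

lemma tripleRatio_swap {a b : ℕ} (c : ℕ) (ha : 1 ≤ a) (hb : 1 ≤ b)
    (e f g : (k : ℕ) → Fin k → Vec d) :
    tripleRatio b a c f e g = (tripleRatio a b c e f g)⁻¹ := by
  obtain ⟨a, rfl⟩ := Nat.exists_eq_add_of_le' ha
  obtain ⟨b, rfl⟩ := Nat.exists_eq_add_of_le' hb
  have swap (p q r : ℕ) :
      wedgeDet (f q) (e p) (g r) = (-1) ^ (p * q) * wedgeDet (e p) (f q) (g r) :=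
    wedgeDet_swap (e p) (f q) (g r)
  simp only [tripleRatio, swap, Nat.add_sub_cancel]
  rw [neg_one_pow_mul_div_cancel (by ring), inv_div]
  congr 2 <;> exact mul_comm _ _

lemma tripleRatio_rotate (a : ℕ) {b c : ℕ} (hb : 1 ≤ b) (hc : 1 ≤ c)
    (e f g : (k : ℕ) → Fin k → Vec d) :
    tripleRatio b c a f g e = tripleRatio a b c e f g := by
  obtain ⟨b, rfl⟩ := Nat.exists_eq_add_of_le' hb
  obtain ⟨c, rfl⟩ := Nat.exists_eq_add_of_le' hc
  have rotate (p q r : ℕ) :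
      wedgeDet (f q) (g r) (e p) = (-1) ^ (p * (q + r)) * wedgeDet (e p) (f q) (g r) :=
    wedgeDet_rotate (e p) (f q) (g r)
  simp only [tripleRatio, rotate, Nat.add_sub_cancel]
  rw [neg_one_pow_mul_div_cancel (by ring)]
  congr 1 <;> ring

end TripleRatio

section MaxSpan

variable {d : ℕ}

lemma MaxSpan.comp_perm {t : ℕ} {F : Fin t → ℕ → Submodule ℝ (Vec d)} (hF : MaxSpan F)
    (σ : Equiv.Perm (Fin t)) : MaxSpan (F ∘ σ) := by
  intro a ha
  have iSup_eq : ⨆ j, (F ∘ σ) j (a j) = ⨆ j, F j (a (σ.symm j)) :=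
    σ.iSup_congr fun j => by simp
  rw [iSup_eq, hF _ fun j => ha (σ.symm j), Equiv.sum_comp σ.symm a]

lemma MaxSpan.iSup_eq_top {t : ℕ} {F : Fin t → ℕ → Submodule ℝ (Vec d)} (hF : MaxSpan F)
    {a : Fin t → ℕ} (ha : ∑ j, a j = d) : ⨆ j, F j (a j) = ⊤ := by
  have le_dim (j : Fin t) : a j ≤ d :=
    ha ▸ Finset.single_le_sum (fun _ _ => Nat.zero_le _) (Finset.mem_univ j)
  apply Submodule.eq_top_of_finrank_eq
  rw [hF a le_dim, ha, min_self, Module.finrank_fin_fun]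

variable {E F G : ℕ → Submodule ℝ (Vec d)}

lemma MaxSpan.rotate (hmax : MaxSpan ![E, F, G]) : MaxSpan ![F, G, E] := by
  convert! hmax.comp_perm (finRotate 3) using 1
  funext j
  fin_cases j <;> rfl

lemma MaxSpan.swap (hmax : MaxSpan ![E, F, G]) : MaxSpan ![F, E, G] := by
  convert! hmax.comp_perm (Equiv.swap 0 1) using 1
  funext j
  fin_cases j <;> rfl

variable {e f g : (k : ℕ) → Fin k → Vec d}

lemma MaxSpan.wedgeDet_ne_zero (hmax : MaxSpan ![E, F, G]) (he : ChoiceFor E e)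
    (hf : ChoiceFor F f) (hg : ChoiceFor G g) {p q r : ℕ} (h : p + q + r = d) :
    wedgeDet (e p) (f q) (g r) ≠ 0 := by
  have sup_eq_top : E p ⊔ F q ⊔ G r = ⊤ := by
    have iSup_eq_top := hmax.iSup_eq_top (a := ![p, q, r]) (by simp [Fin.sum_univ_three, h])
    simpa using iSup_eq_top
  rwa [wedgeDet_ne_zero_iff _ _ _ h, he p (by lia), hf q (by lia), hg r (by lia)]

lemma MaxSpan.tripleRatio_ne_zero (hmax : MaxSpan ![E, F, G]) (he : ChoiceFor E e)
    (hf : ChoiceFor F f) (hg : ChoiceFor G g) {a b c : ℕ} (ha : 1 ≤ a) (hb : 1 ≤ b)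
    (hc : 1 ≤ c) (habc : a + b + c = d) : tripleRatio a b c e f g ≠ 0 := by
  have factor_ne_zero {p q r : ℕ} (h : p + q + r = d) : wedgeDet (e p) (f q) (g r) ≠ 0 :=
    hmax.wedgeDet_ne_zero he hf hg h
  refine div_ne_zero (mul_ne_zero (mul_ne_zero ?_ ?_) ?_)
    (mul_ne_zero (mul_ne_zero ?_ ?_) ?_) <;>
    exact factor_ne_zero (by lia)

end MaxSpan

theorem stmt11_general {d : ℕ} (E F G : ℕ → Submodule ℝ (Vec d)) (hmax : MaxSpan ![E, F, G])
    (a b c : ℕ) (ha : 1 ≤ a) (hb : 1 ≤ b) (hc : 1 ≤ c) (habc : a + b + c = d) :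
    MaxSpan ![F, G, E] ∧ MaxSpan ![F, E, G] ∧
    ∀ e f g : (k : ℕ) → Fin k → Vec d,
      ChoiceFor E e → ChoiceFor F f → ChoiceFor G g →
      tripleRatio a b c e f g = tripleRatio b c a f g e ∧
      tripleRatio a b c e f g * tripleRatio b a c f e g = 1 := by
  refine ⟨hmax.rotate, hmax.swap, fun e f g he hf hg => ⟨?_, ?_⟩⟩
  · exact (tripleRatio_rotate a hb hc e f g).symm
  · rw [tripleRatio_swap c ha hb]
    exact mul_inv_cancel₀ (hmax.tripleRatio_ne_zero he hf hg ha hb hc habc)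

/-- Remark 2.5 (symmetries of triple ratios): for a maximum span triple `(E,F,G)`
the permuted triples `(F,G,E)` and `(F,E,G)` have the maximum span property and
`X_{a,b,c}(E,F,G) = X_{b,c,a}(F,G,E)` and
`X_{a,b,c}(E,F,G) · X_{b,a,c}(F,E,G) = 1`. -/
theorem stmt11 {d : ℕ} (E F G : ℕ → Submodule ℝ (Vec d))
    (hE : IsFlag E) (hF : IsFlag F) (hG : IsFlag G)
    (hmax : MaxSpan ![E, F, G])
    (a b c : ℕ) (ha : 1 ≤ a) (hb : 1 ≤ b) (hc : 1 ≤ c) (habc : a + b + c = d) :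
    MaxSpan ![F, G, E] ∧ MaxSpan ![F, E, G] ∧
    ∀ e f g : (k : ℕ) → Fin k → Vec d,
      ChoiceFor E e → ChoiceFor F f → ChoiceFor G g →
      tripleRatio a b c e f g = tripleRatio b c a f g e ∧
      tripleRatio a b c e f g * tripleRatio b a c f e g = 1 :=
  stmt11_general E F G hmax a b c ha hb hc habc
end
end
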